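/- (Cauchy–Pompeiu formula, interior case; Lemma 2.1(a), stated on a disc, the only case the paper uses.) Let c ∈ ℂ and R > 0, and let f : ℂ → ℂ be continuously real-differentiable on an open set containing the closed disc {w : |w − c| ≤ R}. Then for every λ ∈ ℂ with |λ − c| < R one has f(λ) = (1/(2πi)) ∮_{|w−c|=R} f(w)/(w − λ) dw − (1/π) ∫_{|w−c|<R} (∂̄f)(w)/(w − λ) dA(w). -/

import Mathlib

open MeasureTheory

/-- The Wirtinger derivative `∂̄f(z) = (1/2)·(∂ₓf(z) + i·∂_yf(z))`. -/
noncomputable def dbar (f : ℂ → ℂ) (z : ℂ) : ℂ :=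
  (1 / 2) * (fderiv ℝ f z 1 + Complex.I * fderiv ℝ f z Complex.I)

/-!
In the cone coordinates `w = z + t (γ(θ) - z)`, where `γ` runs along the boundary of a convex domain
containing `z`, the Jacobian `t · Im(conj (γ - z) γ')` cancels the singularity of `1 / (w - z)`, and
`2i ∂̄f(w) / (w - z) dA(w)` becomes `Df(w)(γ - z) · γ' / (γ - z) - Df(w)(γ')`, integrated in `t` and
`θ`. Both terms are bounded, so Fubini applies. The first is a `t`-derivative and integrates along
each segment to `(f(γ) - f(z)) γ' / (γ - z)`. The second is a `θ`-derivative up to the factor `t`,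
and integrates to zero around each closed curve `t = const`.
-/

open AffineMap Bornology Complex Function Metric Set
open scoped ComplexConjugate Topology

theorem bijOn_lineMap_frontier {E : Type*} [NormedAddCommGroup E] [NormedSpace ℝ E] {K : Set E}
    {z : E} (hconv : Convex ℝ K) (hopen : IsOpen K) (hbdd : IsBounded K) (hz : z ∈ K) :
    BijOn (fun p : ℝ × E ↦ lineMap z p.2 p.1) (Ioo 0 1 ×ˢ frontier K) (K \ {z}) := by
  let L : Set E := (z + ·) ⁻¹' K
  -- `ρ w` is the `t` with `w = lineMap z w' t` for a frontier point `w'`.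
  let ρ : E → ℝ := fun w ↦ gauge L (w - z)
  have hL : Convex ℝ L := hconv.translate_preimage_right z
  have hLopen : IsOpen L := hopen.preimage (continuous_const_add z)
  have hLnhds : L ∈ 𝓝 0 := hLopen.mem_nhds (by simpa [L] using hz)
  have hLbdd : IsBounded L := (isometry_add_left z).antilipschitz.isBounded_preimage hbdd
  have ρ_pos {w : E} : 0 < ρ w ↔ w ≠ z :=
    (gauge_pos (absorbent_nhds_zero hLnhds)
      (NormedSpace.isVonNBounded_of_isBounded ℝ hLbdd)).trans sub_ne_zero
  have ρ_lt_one {w : E} : ρ w < 1 ↔ w ∈ K := by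
    simp [ρ, gauge_lt_one_iff_mem_interior hL hLnhds, hLopen.interior_eq, L]
  have ρ_eq_one {w : E} : ρ w = 1 ↔ w ∈ frontier K := by
    have hfrontier : frontier L = (z + ·) ⁻¹' frontier K :=
      ((Homeomorph.addLeft z).preimage_frontier K).symm
    simp [ρ, gauge_eq_one_iff_mem_frontier hL hLnhds, hfrontier]
  have ρ_lineMap {w : E} {t : ℝ} (ht : 0 ≤ t) : ρ (lineMap z w t) = t * ρ w := by
    simp [ρ, lineMap_apply, gauge_smul_of_nonneg ht]
  refine ⟨?_, ?_, ?_⟩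
  · rintro ⟨t, w⟩ ⟨⟨ht₀, ht₁⟩, hw⟩
    have hρ : ρ (lineMap z w t) = t := by rw [ρ_lineMap ht₀.le, ρ_eq_one.2 hw, mul_one]
    exact ⟨ρ_lt_one.1 (hρ.trans_lt ht₁), ρ_pos.1 (ht₀.trans_eq hρ.symm)⟩
  · rintro ⟨t, w⟩ ⟨⟨ht₀, -⟩, hw⟩ ⟨t', w'⟩ ⟨⟨ht₀', -⟩, hw'⟩ (heq : lineMap z w t = lineMap z w' t')
    obtain rfl : t = t' := by
      simpa [ρ_lineMap ht₀.le, ρ_lineMap ht₀'.le, ρ_eq_one.2 hw, ρ_eq_one.2 hw'] using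
        congrArg ρ heq
    have hww' : w = w' := by simpa [lineMap_apply, ht₀.ne'] using heq
    rw [hww']
  · rintro w ⟨hw, hwz⟩
    have hpos : 0 < ρ w := ρ_pos.2 hwz
    refine ⟨(ρ w, lineMap z w (ρ w)⁻¹), ⟨⟨hpos, ρ_lt_one.2 hw⟩, ?_⟩, ?_⟩
    · rw [← ρ_eq_one, ρ_lineMap (inv_nonneg.2 hpos.le), inv_mul_cancel₀ hpos.ne']
    · simp [lineMap_apply, smul_smul, mul_inv_cancel₀ hpos.ne']

theorem setIntegral_fderiv_comp_eq_sub {E F : Type*} [NormedAddCommGroup E] [NormedSpace ℝ E]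
    [NormedAddCommGroup F] [NormedSpace ℝ F] [CompleteSpace F] {f : E → F} {σ σ' : ℝ → E}
    {a b C : ℝ} (hab : a ≤ b) (hfσ : ContinuousOn (f ∘ σ) (Icc a b))
    (hσ : ∀ t ∈ Ioo a b, HasDerivAt σ (σ' t) t) (hσ' : ContinuousOn σ' (Icc a b))
    (hf : ∀ t ∈ Ioo a b, DifferentiableAt ℝ f (σ t))
    (hC : ∀ t ∈ Ioo a b, ‖fderiv ℝ f (σ t)‖ ≤ C) :
    ∫ t in Ioo a b, fderiv ℝ f (σ t) (σ' t) = f (σ b) - f (σ a) := by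
  have hderiv (t : ℝ) (ht : t ∈ Ioo a b) :
      HasDerivAt (f ∘ σ) (fderiv ℝ f (σ t) (σ' t)) t :=
    (hf t ht).hasFDerivAt.comp_hasDerivAt t (hσ t ht)
  obtain ⟨M, hM⟩ := isCompact_Icc.exists_bound_of_continuousOn hσ'
  have hbound (t : ℝ) (ht : t ∈ Ioo a b) : ‖deriv (f ∘ σ) t‖ ≤ C * M := by
    rw [(hderiv t ht).deriv]
    exact (fderiv ℝ f (σ t)).le_of_opNorm_le_of_le (hC t ht) (hM t (Ioo_subset_Icc_self ht))
  have hint : IntegrableOn (deriv (f ∘ σ)) (Ioo a b) :=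
    Measure.integrableOn_of_bounded measure_Ioo_lt_top.ne (aestronglyMeasurable_deriv _ _)
      (ae_restrict_of_forall_mem measurableSet_Ioo hbound)
  rw [setIntegral_congr_fun measurableSet_Ioo fun t ht ↦ (hderiv t ht).deriv.symm,
    ← integral_Ioc_eq_integral_Ioo, ← intervalIntegral.integral_of_le hab]
  exact intervalIntegral.integral_eq_sub_of_hasDerivAt_of_le hab hfσ
    (fun t ht ↦ (hderiv t ht).differentiableAt.hasDerivAt)
    ((intervalIntegrable_iff_integrableOn_Ioo_of_le hab).2 hint)

theorem integrableOn_reProdIm_iff {E : Type*} [NormedAddCommGroup E] {g : ℂ → E} {s t : Set ℝ} :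
    IntegrableOn g (s ×ℂ t) ↔ Integrable (fun p : ℝ × ℝ ↦ g ⟨p.1, p.2⟩)
      ((volume.restrict s).prod (volume.restrict t)) := by
  rw [Measure.prod_restrict]
  exact (volume_preserving_equiv_real_prod.symm.integrableOn_comp_preimage
    measurableEquivRealProd.symm.measurableEmbedding).symm

theorem setIntegral_reProdIm {E : Type*} [NormedAddCommGroup E] [NormedSpace ℝ E] (g : ℂ → E)
    (s t : Set ℝ) :
    ∫ u in s ×ℂ t, g u =
      ∫ p, g ⟨p.1, p.2⟩ ∂(volume.restrict s).prod (volume.restrict t) := by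
  rw [Measure.prod_restrict]
  exact (volume_preserving_equiv_real_prod.symm.setIntegral_preimage_emb
    measurableEquivRealProd.symm.measurableEmbedding g (s ×ℂ t)).symm

theorem fderiv_mul_sub_fderiv_mul (f : ℂ → ℂ) (w a b : ℂ) :
    fderiv ℝ f w a * b - fderiv ℝ f w b * a = 2 * I * (conj a * b).im * dbar f w := by
  have expand (v : ℂ) : fderiv ℝ f w v = v.re * fderiv ℝ f w 1 + v.im * fderiv ℝ f w I := by
    conv_lhs => rw [← re_add_im v, ← mul_one (v.re : ℂ)]
    simp only [← real_smul, map_add, map_smul]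
  have hwedge : ((conj a * b).im : ℂ) = a.re * b.im - a.im * b.re := by
    simp [← sub_eq_add_neg]
  rw [expand a, expand b, dbar, hwedge]
  linear_combination
    (b.re * fderiv ℝ f w 1 + b.im * fderiv ℝ f w I) * re_add_im a -
      (a.re * fderiv ℝ f w 1 + a.im * fderiv ℝ f w I) * re_add_im b -
      (a.re * b.im - a.im * b.re) * fderiv ℝ f w I * I_sq

/-- The cone with apex `z` over the curve `γ`, in the coordinates `u.re` (along the segment from `z`
to the curve) and `u.im` (along the curve). The two parameters are packed into one complex number
so that the change of variables formula, which concerns self-maps, applies. -/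
noncomputable def coneMap (z : ℂ) (γ : ℝ → ℂ) (u : ℂ) : ℂ :=
  lineMap z (γ u.im) u.re

section ConeMap

variable {z : ℂ} {γ : ℝ → ℂ}

theorem coneMap_sub_apex (z : ℂ) (γ : ℝ → ℂ) (u : ℂ) :
    coneMap z γ u - z = u.re * (γ u.im - z) := by
  simp [coneMap, lineMap_apply]

theorem hasFDerivAt_coneMap {u : ℂ} (hγ : DifferentiableAt ℝ γ u.im) :
    HasFDerivAt (coneMap z γ)
      (reCLM.smulRight (γ u.im - z) + imCLM.smulRight (u.re * deriv γ u.im)) u := by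
  have hre : HasFDerivAt (fun u : ℂ ↦ u.re) reCLM u := reCLM.hasFDerivAt
  have him : HasFDerivAt (fun u : ℂ ↦ γ u.im - z) (imCLM.smulRight (deriv γ u.im)) u := by
    refine ((hγ.hasDerivAt.hasFDerivAt.comp u imCLM.hasFDerivAt).sub_const z).congr_fderiv ?_
    ext
    simp
  have hcone : coneMap z γ = fun u ↦ u.re • (γ u.im - z) + z := by
    ext u
    simp [coneMap, lineMap_apply]
  rw [hcone]
  refine ((hre.smul him).add_const z).congr_fderiv ?_
  ext
  simp [add_comm, mul_left_comm]

theorem det_reCLM_smulRight_add_imCLM_smulRight (a b : ℂ) :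
    (reCLM.smulRight a + imCLM.smulRight b).det = (conj a * b).im := by
  rw [ContinuousLinearMap.det, ← LinearMap.det_toMatrix basisOneI, Matrix.det_fin_two]
  simp [LinearMap.toMatrix_apply, basisOneI, mul_comm, add_comm, sub_eq_add_neg]

section Convex

variable {K : Set ℂ} {f : ℂ → ℂ} {a b C : ℝ}

theorem coneMap_mem_of_convex (hconv : Convex ℝ K) (hopen : IsOpen K) (hz : z ∈ K) {u : ℂ}
    (hu : u.re ∈ Ico 0 1) (hγ : γ u.im ∈ closure K) : coneMap z γ u ∈ K := by
  rw [coneMap, lineMap_apply_module]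
  rw [← hopen.interior_eq] at hz ⊢
  exact hconv.combo_interior_closure_mem_interior hz hγ (sub_pos.2 hu.2) hu.1
    (sub_add_cancel 1 u.re)

theorem integrableOn_fderiv_coneMap {v k : ℝ → ℂ} (hconv : Convex ℝ K) (hopen : IsOpen K)
    (hz : z ∈ K) (hγ : Continuous γ) (hγK : ∀ θ, γ θ ∈ closure K) (hv : Continuous v)
    (hk : Continuous k) (hC : ∀ w ∈ K, ‖fderiv ℝ f w‖ ≤ C) :
    IntegrableOn (fun u ↦ fderiv ℝ f (coneMap z γ u) (v u.im) * k u.im)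
      (Ioo 0 1 ×ℂ Ioc a b) := by
  have hcone : Continuous (coneMap z γ) := by
    unfold coneMap
    simp only [lineMap_apply]
    fun_prop
  have hmeas : Measurable fun u ↦ fderiv ℝ f (coneMap z γ u) (v u.im) * k u.im :=
    (ContinuousLinearMap.measurable_apply₂.comp
      (((measurable_fderiv ℝ f).comp hcone.measurable).prodMk
        (hv.measurable.comp measurable_im))).mul (hk.measurable.comp measurable_im)
  obtain ⟨V, hV⟩ := isCompact_Icc.exists_bound_of_continuousOn (hv.continuousOn (s := Icc a b))
  obtain ⟨M, hM⟩ := isCompact_Icc.exists_bound_of_continuousOn (hk.continuousOn (s := Icc a b))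
  have hrect : MeasurableSet (Ioo 0 1 ×ℂ Ioc a b) :=
    (measurable_re measurableSet_Ioo).inter (measurable_im measurableSet_Ioc)
  have hfin : volume (Ioo 0 1 ×ℂ Ioc a b) < ⊤ :=
    ((isBounded_Ioo 0 1).reProdIm (isBounded_Ioc a b)).measure_lt_top
  refine Measure.integrableOn_of_bounded (M := C * V * M) hfin.ne hmeas.aestronglyMeasurable
    (ae_restrict_of_forall_mem hrect fun u hu ↦ ?_)
  have hθ : u.im ∈ Icc a b := Ioc_subset_Icc_self hu.2
  have hmem : coneMap z γ u ∈ K :=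
    coneMap_mem_of_convex hconv hopen hz (Ioo_subset_Ico_self hu.1) (hγK _)
  have hfv : ‖fderiv ℝ f (coneMap z γ u) (v u.im)‖ ≤ C * V :=
    ContinuousLinearMap.le_of_opNorm_le_of_le _ (hC _ hmem) (hV _ hθ)
  exact norm_mul_le_of_le hfv (hM _ hθ)

theorem setIntegral_fderiv_coneMap_radial {k : ℝ → ℂ} (hconv : Convex ℝ K) (hopen : IsOpen K)
    (hz : z ∈ K) (hγ : Continuous γ) (hγK : ∀ θ, γ θ ∈ closure K) (hk : Continuous k)
    (hf : ContinuousOn f (closure K)) (hfd : DifferentiableOn ℝ f K)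
    (hC : ∀ w ∈ K, ‖fderiv ℝ f w‖ ≤ C) :
    ∫ u in Ioo 0 1 ×ℂ Ioc a b, fderiv ℝ f (coneMap z γ u) (γ u.im - z) * k u.im =
      ∫ θ in Ioc a b, (f (γ θ) - f z) * k θ := by
  have hint := integrableOn_fderiv_coneMap (a := a) (b := b) (v := fun θ ↦ γ θ - z) hconv hopen hz
    hγ hγK (by fun_prop) hk hC
  rw [setIntegral_reProdIm, integral_prod_symm _ (integrableOn_reProdIm_iff.1 hint)]
  refine setIntegral_congr_fun measurableSet_Ioc fun θ _ ↦ ?_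
  have hK {t : ℝ} (ht : t ∈ Ioo 0 1) : lineMap z (γ θ) t ∈ K :=
    coneMap_mem_of_convex (u := ⟨t, θ⟩) hconv hopen hz (Ioo_subset_Ico_self ht) (hγK θ)
  have hsegment : ContinuousOn (f ∘ lineMap z (γ θ)) (Icc (0 : ℝ) 1) :=
    hf.comp lineMap_continuous.continuousOn fun t ht ↦
      hconv.closure.lineMap_mem (subset_closure hz) (hγK θ) ht
  have hradial := setIntegral_fderiv_comp_eq_sub zero_le_one hsegment
    (fun t _ ↦ hasDerivAt_lineMap) continuousOn_const
    (fun t ht ↦ hfd.differentiableAt (hopen.mem_nhds (hK ht))) (fun t ht ↦ hC _ (hK ht))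
  simp only [coneMap]
  rw [integral_mul_const, hradial, lineMap_apply_one, lineMap_apply_zero]

theorem setIntegral_fderiv_coneMap_angular (hconv : Convex ℝ K) (hopen : IsOpen K) (hz : z ∈ K)
    (hab : a ≤ b) (hγ : ContDiff ℝ 1 γ) (hclosed : γ a = γ b) (hγK : ∀ θ, γ θ ∈ closure K)
    (hfd : DifferentiableOn ℝ f K) (hC : ∀ w ∈ K, ‖fderiv ℝ f w‖ ≤ C) :
    ∫ u in Ioo 0 1 ×ℂ Ioc a b, fderiv ℝ f (coneMap z γ u) (deriv γ u.im) = 0 := by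
  have hγ' : Continuous (deriv γ) := hγ.continuous_deriv le_rfl
  have hint : IntegrableOn (fun u ↦ fderiv ℝ f (coneMap z γ u) (deriv γ u.im))
      (Ioo 0 1 ×ℂ Ioc a b) := by
    simpa using integrableOn_fderiv_coneMap (k := fun _ ↦ 1) hconv hopen hz hγ.continuous hγK hγ'
      continuous_const hC
  rw [setIntegral_reProdIm, integral_prod _ (integrableOn_reProdIm_iff.1 hint)]
  refine setIntegral_eq_zero_of_forall_eq_zero fun t ht ↦ ?_
  have hK (θ : ℝ) : lineMap z (γ θ) t ∈ K :=
    coneMap_mem_of_convex (u := ⟨t, θ⟩) hconv hopen hz (Ioo_subset_Ico_self ht) (hγK θ)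
  have hderiv (θ : ℝ) : HasDerivAt (fun θ ↦ lineMap z (γ θ) t) (t • deriv γ θ) θ := by
    simpa [lineMap_apply] using
      (((hγ.differentiable one_ne_zero θ).hasDerivAt.sub_const z).const_smul t).add_const z
  have hfderiv (θ : ℝ) : DifferentiableAt ℝ f (lineMap z (γ θ) t) :=
    hfd.differentiableAt (hopen.mem_nhds (hK θ))
  have hangular := setIntegral_fderiv_comp_eq_sub hab
    (fun θ _ ↦
      ((hfderiv θ).continuousAt.comp_of_eq (hderiv θ).continuousAt rfl).continuousWithinAt)
    (fun θ _ ↦ hderiv θ) (by fun_prop) (fun θ _ ↦ hfderiv θ) (fun θ _ ↦ hC _ (hK θ))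
  simp only [map_smul, integral_smul, hclosed, sub_self] at hangular
  rw [integral_Ioc_eq_integral_Ioo]
  exact (smul_eq_zero.1 hangular).resolve_left ht.1.ne'

end Convex

end ConeMap

/-- `γ` is a `T`-periodic `C¹` parametrization of the boundary of `K`, injective on a period and
running counterclockwise as seen from `z`. Here `(conj (γ - z) * γ').im` is the determinant of the
pair of plane vectors `γ - z` and `γ'`. -/
structure IsBoundaryLoop (K : Set ℂ) (z : ℂ) (γ : ℝ → ℂ) (T : ℝ) : Prop where
  period_pos : 0 < T
  periodic : Periodic γ T
  contDiff : ContDiff ℝ 1 γ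
  injOn : InjOn γ (Ioc 0 T)
  range_eq : range γ = frontier K
  wedge_nonneg : ∀ θ, 0 ≤ (conj (γ θ - z) * deriv γ θ).im

namespace IsBoundaryLoop

variable {K : Set ℂ} {z : ℂ} {γ : ℝ → ℂ} {T C : ℝ} {f : ℂ → ℂ}

theorem mem_frontier (h : IsBoundaryLoop K z γ T) (θ : ℝ) : γ θ ∈ frontier K :=
  h.range_eq ▸ mem_range_self θ

theorem bijOn_Ioc (h : IsBoundaryLoop K z γ T) : BijOn γ (Ioc 0 T) (frontier K) := by
  refine ⟨fun θ _ ↦ h.mem_frontier θ, h.injOn, ?_⟩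
  rw [← h.range_eq, ← h.periodic.image_Ioc h.period_pos 0, zero_add]
  exact surjOn_image γ (Ioc 0 T)

theorem sub_ne_zero (h : IsBoundaryLoop K z γ T) (hopen : IsOpen K) (hz : z ∈ K) (θ : ℝ) :
    γ θ - z ≠ 0 :=
  _root_.sub_ne_zero.2 fun heq ↦ (hopen.frontier_eq ▸ h.mem_frontier θ).2 (heq ▸ hz)

theorem bijOn_coneMap (h : IsBoundaryLoop K z γ T) (hconv : Convex ℝ K) (hopen : IsOpen K)
    (hbdd : IsBounded K) (hz : z ∈ K) :
    BijOn (coneMap z γ) (Ioo 0 1 ×ℂ Ioc 0 T) (K \ {z}) := by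
  have hrect : BijOn (fun u : ℂ ↦ (u.re, u.im)) (Ioo 0 1 ×ℂ Ioc 0 T) (Ioo 0 1 ×ˢ Ioc 0 T) :=
    ⟨fun _ hu ↦ hu, equivRealProd.injective.injOn, fun p hp ↦ ⟨⟨p.1, p.2⟩, hp, rfl⟩⟩
  have hprod : BijOn (Prod.map id γ) (Ioo (0 : ℝ) 1 ×ˢ Ioc 0 T) (Ioo 0 1 ×ˢ frontier K) :=
    (bijOn_id _).prodMap h.bijOn_Ioc
  exact ((bijOn_lineMap_frontier hconv hopen hbdd hz).comp (hprod.comp hrect)).congr fun _ _ ↦ rfl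

theorem setIntegral_dbar_div_sub (h : IsBoundaryLoop K z γ T) (hconv : Convex ℝ K)
    (hopen : IsOpen K) (hbdd : IsBounded K) (hz : z ∈ K) (f : ℂ → ℂ) :
    2 * I * ∫ w in K, dbar f w / (w - z) =
      ∫ u in Ioo 0 1 ×ℂ Ioc 0 T, (fderiv ℝ f (coneMap z γ u) (γ u.im - z) *
        (deriv γ u.im / (γ u.im - z)) - fderiv ℝ f (coneMap z γ u) (deriv γ u.im)) := by
  have hrect : MeasurableSet (Ioo 0 1 ×ℂ Ioc 0 T) :=
    (measurable_re measurableSet_Ioo).inter (measurable_im measurableSet_Ioc)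
  have hbij := h.bijOn_coneMap hconv hopen hbdd hz
  rw [← setIntegral_congr_set (sdiff_null_ae_eq_self (measure_singleton z)), ← hbij.image_eq,
    integral_image_eq_integral_abs_det_fderiv_smul volume hrect
      (fun u _ ↦ (hasFDerivAt_coneMap (h.contDiff.differentiable one_ne_zero _)).hasFDerivWithinAt)
      hbij.injOn, ← integral_const_mul]
  refine setIntegral_congr_fun hrect fun u hu ↦ ?_
  have hre : (u.re : ℂ) ≠ 0 := ofReal_ne_zero.2 hu.1.1.ne'
  have hne := h.sub_ne_zero hopen hz u.im
  have hdet : |(reCLM.smulRight (γ u.im - z) + imCLM.smulRight (u.re * deriv γ u.im)).det| =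
      u.re * (conj (γ u.im - z) * deriv γ u.im).im := by
    rw [det_reCLM_smulRight_add_imCLM_smulRight, mul_left_comm, im_ofReal_mul,
      abs_of_nonneg (mul_nonneg hu.1.1.le (h.wedge_nonneg _))]
  have hwedge := fderiv_mul_sub_fderiv_mul f (coneMap z γ u) (γ u.im - z) (deriv γ u.im)
  simp only [hdet, coneMap_sub_apex, real_smul, ofReal_mul]
  field_simp
  linear_combination -hwedge

theorem cauchy_pompeiu (h : IsBoundaryLoop K z γ T) (hconv : Convex ℝ K) (hopen : IsOpen K)
    (hbdd : IsBounded K) (hz : z ∈ K) (hf : ContinuousOn f (closure K))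
    (hfd : DifferentiableOn ℝ f K) (hC : ∀ w ∈ K, ‖fderiv ℝ f w‖ ≤ C) :
    2 * I * ∫ w in K, dbar f w / (w - z) =
      (∫ θ in 0..T, deriv γ θ • (f (γ θ) / (γ θ - z))) -
        f z * ∫ θ in 0..T, deriv γ θ • (γ θ - z)⁻¹ := by
  have hγ : Continuous γ := h.contDiff.continuous
  have hγ' : Continuous (deriv γ) := h.contDiff.continuous_deriv le_rfl
  have hne := h.sub_ne_zero hopen hz
  have hcl (θ : ℝ) : γ θ ∈ closure K := frontier_subset_closure (h.mem_frontier θ)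
  have hk : Continuous fun θ ↦ deriv γ θ / (γ θ - z) := by fun_prop (disch := exact hne _)
  have hfγ : Continuous (f ∘ γ) := hf.comp_continuous hγ hcl
  have hradial := integrableOn_fderiv_coneMap (a := 0) (b := T) (v := fun θ ↦ γ θ - z) hconv hopen
    hz hγ hcl (by fun_prop) hk hC
  have hangular := integrableOn_fderiv_coneMap (a := 0) (b := T) (k := fun _ ↦ 1) hconv hopen hz hγ
    hcl hγ' continuous_const hC
  simp only [mul_one] at hangular
  rw [h.setIntegral_dbar_div_sub hconv hopen hbdd hz, integral_sub hradial hangular,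
    setIntegral_fderiv_coneMap_radial hconv hopen hz hγ hcl hk hf hfd hC,
    setIntegral_fderiv_coneMap_angular hconv hopen hz h.period_pos.le h.contDiff
      h.periodic.eq.symm hcl hfd hC, sub_zero, ← intervalIntegral.integral_of_le h.period_pos.le,
    ← intervalIntegral.integral_const_mul, ← intervalIntegral.integral_sub]
  · congr! 2 with θ
    simp only [smul_eq_mul]
    ring
  · exact (hγ'.smul (hfγ.div (hγ.sub continuous_const) hne)).intervalIntegrable _ _
  · exact (continuous_const.mul
      (hγ'.smul ((hγ.sub continuous_const).inv₀ hne))).intervalIntegrable _ _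

end IsBoundaryLoop

theorem im_conj_circleMap_sub_mul_deriv_nonneg {c z : ℂ} {R : ℝ} (hz : z ∈ ball c R) (θ : ℝ) :
    0 ≤ (conj (circleMap c R θ - z) * deriv (circleMap c R) θ).im := by
  let e := circleMap 0 R θ
  have he : ‖e‖ = R := by simp [e, (pos_of_mem_ball hz).le]
  have hre : (conj (z - c) * e).re ≤ normSq e :=
    calc (conj (z - c) * e).re ≤ ‖conj (z - c) * e‖ := re_le_norm _
      _ = ‖z - c‖ * ‖e‖ := by rw [norm_mul, norm_conj]
      _ ≤ ‖e‖ * ‖e‖ := by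
        gcongr
        exact (mem_ball_iff_norm.1 hz).le.trans_eq he.symm
      _ = normSq e := by rw [normSq_eq_norm_sq, sq]
  have hsub : circleMap c R θ - z = e - (z - c) := by
    simp only [e, ← circleMap_sub_center c R θ]
    ring
  have him : (conj (e - (z - c)) * (e * I)).im = normSq e - (conj (z - c) * e).re := by
    rw [← mul_assoc, mul_I_im, map_sub, sub_mul, sub_re, ← normSq_eq_conj_mul_self, ofReal_re]
  rw [hsub, deriv_circleMap, him]
  exact sub_nonneg.2 hre

theorem isBoundaryLoop_circleMap {c z : ℂ} {R : ℝ} (hz : z ∈ ball c R) :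
    IsBoundaryLoop (ball c R) z (circleMap c R) (2 * Real.pi) where
  period_pos := Real.two_pi_pos
  periodic := periodic_circleMap c R
  contDiff := contDiff_circleMap c R
  injOn := by
    rw [← uIoc_of_le Real.two_pi_pos.le]
    refine injOn_circleMap_of_abs_sub_le (pos_of_mem_ball hz).ne' ?_
    rw [zero_sub, abs_neg, abs_of_pos Real.two_pi_pos]
  range_eq := by
    have hR := pos_of_mem_ball hz
    rw [range_circleMap, frontier_ball c hR.ne', abs_of_pos hR]
  wedge_nonneg := im_conj_circleMap_sub_mul_deriv_nonneg hz

theorem cauchy_pompeiu_interior_general {c z : ℂ} {R C : ℝ} {f : ℂ → ℂ} (hz : z ∈ ball c R)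
    (hf : ContinuousOn f (closedBall c R)) (hfd : DifferentiableOn ℝ f (ball c R))
    (hC : ∀ w ∈ ball c R, ‖fderiv ℝ f w‖ ≤ C) :
    f z = (1 / (2 * (Real.pi : ℂ) * I)) * circleIntegral (fun w ↦ f w / (w - z)) c R
      - (1 / (Real.pi : ℂ)) * ∫ w in ball c R, dbar f w / (w - z) := by
  have hloop := (isBoundaryLoop_circleMap hz).cauchy_pompeiu (convex_ball c R) isOpen_ball
    isBounded_ball hz (closure_ball c (pos_of_mem_ball hz).ne' ▸ hf) hfd hC
  have hwinding := circleIntegral.integral_sub_inv_of_mem_ball hz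
  rw [circleIntegral] at hwinding ⊢
  rw [hwinding] at hloop
  have hpi : (Real.pi : ℂ) ≠ 0 := ofReal_ne_zero.2 Real.pi_ne_zero
  field_simp
  linear_combination hloop

/-- Cauchy–Pompeiu formula, interior case (Lemma 2.1(a)): if `f` is continuously
real-differentiable on an open set containing the closed disc of radius `R` about `c`,
then for `|z - c| < R`,
`f z = (1/(2πi)) ∮_{|w-c|=R} f w/(w-z) dw − (1/π) ∫_{|w-c|<R} ∂̄f(w)/(w-z) dA(w)`. -/
theorem cauchy_pompeiu_interior (c : ℂ) (R : ℝ) (hR : 0 < R) (f : ℂ → ℂ)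
    (U : Set ℂ) (hU : IsOpen U) (hUb : Metric.closedBall c R ⊆ U)
    (hf : ContDiffOn ℝ 1 f U) (z : ℂ) (hz : ‖z - c‖ < R) :
    f z = (1 / (2 * (Real.pi : ℂ) * Complex.I)) *
        circleIntegral (fun w => f w / (w - z)) c R
      - (1 / (Real.pi : ℂ)) * ∫ w in Metric.ball c R, dbar f w / (w - z) := by
  obtain ⟨C, hC⟩ := (isCompact_closedBall c R).exists_bound_of_continuousOn
    ((hf.continuousOn_fderiv_of_isOpen hU le_rfl).mono hUb)
  exact cauchy_pompeiu_interior_general (mem_ball_iff_norm.2 hz) (hf.continuousOn.mono hUb)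
    (hf.differentiableOn_one.mono (ball_subset_closedBall.trans hUb))
    fun w hw ↦ hC w (ball_subset_closedBall hw)
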